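/- Assume α ≥ 1, λ is nondecreasing on [t₀,∞), b(t) > β'(t) + β(t)/t (equivalently w(t) > 0) for every t ≥ t₀, and (α−3)·w(t) − t·w'(t) ≥ 0 for every t ≥ t₀. Then ∫_{t₀}^{∞} ( (α−3)·t·w(t) − t²·w'(t) )·(Φ_{λ(t)}(x(t)) − Φ*) dt < +∞. -/

import Mathlib

open Set MeasureTheory Filter Real

noncomputable section

/-- Convexity for extended-real-valued functions. -/
def EConvexOn {H : Type*} [NormedAddCommGroup H] [NormedSpace ℝ H] (f : H → EReal) : Prop :=
  ∀ x y : H, ∀ a c : ℝ, 0 ≤ a → 0 ≤ c → a + c = 1 →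
    f (a • x + c • y) ≤ (a : EReal) * f x + (c : EReal) * f y

/-- `p` is the proximal point of `f` with parameter `l` at `x`, i.e. the (unique) minimizer of
`y ↦ f y + ‖x - y‖² / (2l)`. -/
def IsProxPt {H : Type*} [NormedAddCommGroup H] [InnerProductSpace ℝ H]
    (f : H → EReal) (l : ℝ) (x p : H) : Prop :=
  ∀ y : H, f p + ((‖x - p‖ ^ 2 / (2 * l) : ℝ) : EReal)
      ≤ f y + ((‖x - y‖ ^ 2 / (2 * l) : ℝ) : EReal)

/-- The Moreau envelope of `f` with parameter `l` (as a real number). -/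
def moreau {H : Type*} [NormedAddCommGroup H] [InnerProductSpace ℝ H]
    (f : H → EReal) (l : ℝ) (x : H) : ℝ :=
  (⨅ y : H, f y + ((‖x - y‖ ^ 2 / (2 * l) : ℝ) : EReal)).toReal

/-!
With `g = ∇Φ_λ(x)`, `w = b - β' - β / t` and a minimizer `z` of `Φ`, the energy
`E = t² w (Φ_λ(x) - Φ*) + ½ ‖(α - 1)(x - z) + t (ẋ + β g)‖²` is nonnegative, and since
`d/dt Φ_λ(x) = ⟪g, ẋ⟫ - (λ' / 2) ‖g‖²` the equation of motion gives
`-E' = ((α - 3) t w - t² w') (Φ_λ(x) - Φ*) + (α - 1) t w (⟪g, x - z⟫ - (Φ_λ(x) - Φ*))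
  + t² w (β + λ' / 2) ‖g‖²`.
Convexity makes the second term nonnegative, and the last one is nonnegative as `β + λ' / 2 ≥ 0`,
so the integral is at most `E(t₀)`. With `p` the proximal point, the curve `Φ_λ(x)` is
differentiated at `t` by squeezing its increment up to time `r` between those of the penalty
`‖x - q‖² / (2λ)` for `q = p(r)` and for `q = p(t)`.
-/

section RealAnalysis

theorem hasDerivWithinAt_of_increment_squeeze {F lower upper : ℝ → ℝ} {s : Set ℝ} {t d : ℝ}
    (hlower : HasDerivWithinAt lower d s t) (hupper : HasDerivWithinAt upper d s t)
    (hlower_zero : lower t = 0) (hupper_zero : upper t = 0)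
    (hlower_le : ∀ r ∈ s, lower r ≤ F r - F t) (hle_upper : ∀ r ∈ s, F r - F t ≤ upper r) :
    HasDerivWithinAt F d s t := by
  rw [hasDerivWithinAt_iff_isLittleO] at *
  refine Asymptotics.IsBigO.trans_isLittleO (.of_bound 1 ?_) (hlower.norm_left.add hupper.norm_left)
  filter_upwards [self_mem_nhdsWithin] with r hr
  simp only [hlower_zero, hupper_zero, sub_zero, Real.norm_eq_abs, one_mul, smul_eq_mul]
  rw [abs_of_nonneg (a := |_| + |_|) (by positivity), add_comm]
  exact (abs_le_max_abs_abs (sub_le_sub_right (hlower_le r hr) _)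
    (sub_le_sub_right (hle_upper r hr) _)).trans
    (max_le (le_add_of_nonneg_left (abs_nonneg _)) (le_add_of_nonneg_right (abs_nonneg _)))

theorem exists_tendsto_atTop_of_antitoneOn_Ici {ι R : Type*} [LinearOrder ι]
    [ConditionallyCompleteLinearOrder R] [TopologicalSpace R] [OrderTopology R] {f : ι → R}
    {a : ι} {m : R} (hanti : AntitoneOn f (Ici a)) (hbound : ∀ t ∈ Ici a, m ≤ f t) :
    ∃ l, m ≤ l ∧ Tendsto f atTop (nhds l) := by
  have : Nonempty ι := ⟨a⟩
  have hanti_max : Antitone fun t => f (max t a) := fun _ _ hst =>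
    hanti (mem_Ici.2 (le_max_right _ _)) (mem_Ici.2 (le_max_right _ _)) (max_le_max_right _ hst)
  have hbdd : BddBelow (range fun t => f (max t a)) :=
    ⟨m, forall_mem_range.2 fun t => hbound _ (le_max_right t a)⟩
  refine ⟨_, le_ciInf fun t => hbound _ (le_max_right t a),
    (tendsto_atTop_ciInf hanti_max hbdd).congr' ?_⟩
  filter_upwards [eventually_ge_atTop a] with t ht
  rw [max_eq_left ht]

theorem setLIntegral_Ici_neg_deriv_le {E E' : ℝ → ℝ} {a : ℝ}
    (hderiv : ∀ t ∈ Ici a, HasDerivWithinAt E (E' t) (Ici a) t)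
    (hE' : ∀ t ∈ Ioi a, E' t ≤ 0) (hE : ∀ t ∈ Ici a, 0 ≤ E t) :
    ∫⁻ t in Ici a, ENNReal.ofReal (-E' t) ≤ ENNReal.ofReal (E a) := by
  have hcont : ContinuousOn E (Ici a) := fun t ht => (hderiv t ht).continuousWithinAt
  have hderiv_Ioi : ∀ t ∈ Ioi a, HasDerivAt E (E' t) t := fun t ht =>
    (hderiv t (Ioi_subset_Ici_self ht)).hasDerivAt (Ici_mem_nhds ht)
  have hanti : AntitoneOn E (Ici a) := by
    refine antitoneOn_of_hasDerivWithinAt_nonpos (f' := E') (convex_Ici a) hcont ?_ ?_ <;>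
      rw [interior_Ici]
    exacts [fun t ht => (hderiv_Ioi t ht).hasDerivWithinAt, hE']
  obtain ⟨l, hl, hlim⟩ := exists_tendsto_atTop_of_antitoneOn_Ici hanti hE
  have hcont_left := hcont a self_mem_Ici
  have hint : Integrable E' (volume.restrict (Ioi a)) :=
    integrableOn_Ioi_deriv_of_nonpos hcont_left hderiv_Ioi hE' hlim
  have hnonneg : 0 ≤ᵐ[volume.restrict (Ioi a)] fun t => -E' t :=
    (ae_restrict_iff' measurableSet_Ioi).2 <| ae_of_all _ fun t ht => neg_nonneg.2 (hE' t ht)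
  rw [setLIntegral_congr Ioi_ae_eq_Ici.symm,
    ← ofReal_integral_eq_lintegral_ofReal hint.fun_neg hnonneg, integral_neg,
    integral_Ioi_of_hasDerivAt_of_nonpos hcont_left hderiv_Ioi hE' hlim]
  exact ENNReal.ofReal_le_ofReal (by linarith)

end RealAnalysis

namespace EConvexOn

variable {H : Type*} [NormedAddCommGroup H] [NormedSpace ℝ H] {Φ : H → EReal}

theorem ne_top (hΦ : EConvexOn Φ) (hbot : ∀ y, Φ y ≠ ⊥) {x y : H} (hx : Φ x ≠ ⊤)
    (hy : Φ y ≠ ⊤) {a c : ℝ} (ha : 0 ≤ a) (hc : 0 ≤ c) (hac : a + c = 1) :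
    Φ (a • x + c • y) ≠ ⊤ := by
  have hconv := hΦ x y a c ha hc hac
  rw [← EReal.coe_toReal hx (hbot x), ← EReal.coe_toReal hy (hbot y)] at hconv
  exact ne_top_of_le_ne_top (by exact_mod_cast EReal.coe_ne_top _) hconv

theorem toReal_le (hΦ : EConvexOn Φ) (hbot : ∀ y, Φ y ≠ ⊥) {x y : H} (hx : Φ x ≠ ⊤)
    (hy : Φ y ≠ ⊤) {a c : ℝ} (ha : 0 ≤ a) (hc : 0 ≤ c) (hac : a + c = 1) :
    (Φ (a • x + c • y)).toReal ≤ a * (Φ x).toReal + c * (Φ y).toReal := by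
  have hconv := hΦ x y a c ha hc hac
  rw [← EReal.coe_toReal hx (hbot x), ← EReal.coe_toReal hy (hbot y),
    ← EReal.coe_toReal (hΦ.ne_top hbot hx hy ha hc hac) (hbot _)] at hconv
  exact_mod_cast hconv

end EConvexOn

section Envelope

variable {H : Type*} [NormedAddCommGroup H] [InnerProductSpace ℝ H] {Φ : H → EReal}

namespace IsProxPt

variable {l : ℝ} {x p y : H}

theorem ne_top (hp : IsProxPt Φ l x p) (hy : Φ y ≠ ⊤) : Φ p ≠ ⊤ := by
  intro hp_top
  have hmin := hp y
  rw [hp_top, EReal.top_add_coe, top_le_iff] at hmin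
  exact EReal.add_ne_top hy (EReal.coe_ne_top _) hmin

theorem toReal_add_le (hp : IsProxPt Φ l x p) (hbot : ∀ y, Φ y ≠ ⊥) (hy : Φ y ≠ ⊤) :
    (Φ p).toReal + ‖x - p‖ ^ 2 / (2 * l) ≤ (Φ y).toReal + ‖x - y‖ ^ 2 / (2 * l) := by
  have hmin := hp y
  rw [← EReal.coe_toReal (hp.ne_top hy) (hbot p), ← EReal.coe_toReal hy (hbot y)] at hmin
  exact_mod_cast hmin

theorem moreau_eq (hp : IsProxPt Φ l x p) (hbot : Φ p ≠ ⊥) (htop : Φ p ≠ ⊤) :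
    moreau Φ l x = (Φ p).toReal + ‖x - p‖ ^ 2 / (2 * l) := by
  have hinf : (⨅ y : H, Φ y + ((‖x - y‖ ^ 2 / (2 * l) : ℝ) : EReal))
      = Φ p + ((‖x - p‖ ^ 2 / (2 * l) : ℝ) : EReal) :=
    le_antisymm (iInf_le _ p) (le_iInf hp)
  rw [moreau, hinf, EReal.toReal_add htop hbot (EReal.coe_ne_top _) (EReal.coe_ne_bot _),
    EReal.toReal_coe]

theorem toReal_le_moreau {z : H} (hp : IsProxPt Φ l x p) (hl : 0 < l) (hbot : ∀ y, Φ y ≠ ⊥)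
    (hz : ∀ y, Φ z ≤ Φ y) (htop : Φ z ≠ ⊤) : (Φ z).toReal ≤ moreau Φ l x := by
  rw [hp.moreau_eq (hbot p) (hp.ne_top htop)]
  exact (EReal.toReal_le_toReal (hz p) (hbot z) (hp.ne_top htop)).trans
    (le_add_of_nonneg_right (by positivity))

theorem toReal_add_inner_le_add_mul (hp : IsProxPt Φ l x p) (hΦ : EConvexOn Φ)
    (hbot : ∀ y, Φ y ≠ ⊥) (hy : Φ y ≠ ⊤) {c : ℝ} (hc : c ∈ Ioc 0 1) :
    (Φ p).toReal + inner ℝ (x - p) (y - p) / l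
      ≤ (Φ y).toReal + c * (‖y - p‖ ^ 2 / (2 * l)) := by
  have hc_compl : 0 ≤ 1 - c := sub_nonneg.2 hc.2
  have hsum : 1 - c + c = 1 := sub_add_cancel 1 c
  have hp_top := hp.ne_top hy
  have hconv := hΦ.toReal_le hbot hp_top hy hc_compl hc.1.le hsum
  have hmin := hp.toReal_add_le hbot (hΦ.ne_top hbot hp_top hy hc_compl hc.1.le hsum)
  have hnorm : ‖x - ((1 - c) • p + c • y)‖ ^ 2
      = ‖x - p‖ ^ 2 - 2 * c * inner ℝ (x - p) (y - p) + c ^ 2 * ‖y - p‖ ^ 2 := by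
    rw [show x - ((1 - c) • p + c • y) = (x - p) - c • (y - p) by module, norm_sub_sq_real,
      real_inner_smul_right, norm_smul, mul_pow, Real.norm_eq_abs, sq_abs]
    ring
  refine le_of_mul_le_mul_left ?_ hc.1
  rw [hnorm] at hmin
  linear_combination hmin + hconv

theorem toReal_add_inner_le (hp : IsProxPt Φ l x p) (hΦ : EConvexOn Φ)
    (hbot : ∀ y, Φ y ≠ ⊥) (hy : Φ y ≠ ⊤) :
    (Φ p).toReal + inner ℝ (x - p) (y - p) / l ≤ (Φ y).toReal := by
  have hlim : Tendsto (fun c : ℝ => (Φ y).toReal + c * (‖y - p‖ ^ 2 / (2 * l)))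
      (nhdsWithin 0 (Ioi 0)) (nhds (Φ y).toReal) :=
    (Continuous.tendsto' (by fun_prop) _ _ (by simp)).mono_left nhdsWithin_le_nhds
  refine ge_of_tendsto hlim ?_
  filter_upwards [Ioc_mem_nhdsGT (zero_lt_one' ℝ)] with c hc
  exact hp.toReal_add_inner_le_add_mul hΦ hbot hy hc

theorem moreau_sub_le_inner (hp : IsProxPt Φ l x p) (hl : 0 < l) (hΦ : EConvexOn Φ)
    (hbot : ∀ y, Φ y ≠ ⊥) (hy : Φ y ≠ ⊤) :
    moreau Φ l x - (Φ y).toReal ≤ inner ℝ (l⁻¹ • (x - p)) (x - y) := by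
  have hsubgrad := hp.toReal_add_inner_le hΦ hbot hy
  have hpenalty : 0 ≤ ‖x - p‖ ^ 2 / (2 * l) := by positivity
  have hinner : inner ℝ (l⁻¹ • (x - p)) (x - y)
      = ‖x - p‖ ^ 2 / l - inner ℝ (x - p) (y - p) / l := by
    rw [← sub_sub_sub_cancel_right x y p, real_inner_smul_left, inner_sub_right,
      real_inner_self_eq_norm_sq]
    ring
  rw [hinner, hp.moreau_eq (hbot p) (hp.ne_top hy)]
  linear_combination hsubgrad + hpenalty

end IsProxPt

theorem norm_sub_sq_eq_add_inner (a b q : H) :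
    ‖a - q‖ ^ 2 = ‖b - q‖ ^ 2 + inner ℝ (a - b) (a + b - (2 : ℝ) • q) := by
  rw [← sub_add_sub_cancel a b q, norm_add_sq_real, ← real_inner_self_eq_norm_sq (a - b),
    show a + b - (2 : ℝ) • q = (a - b) + (2 : ℝ) • (b - q) by module, inner_add_right,
    real_inner_smul_right]
  ring

-- Only `x` and `λ` are differenced on the right, so continuity of `q` suffices for the limit.
theorem slope_penalty_increment (x q : ℝ → H) (lam : ℝ → ℝ) (t r : ℝ) :
    slope (fun r => ‖x r - q r‖ ^ 2 / (2 * lam r) - ‖x t - q r‖ ^ 2 / (2 * lam t)) t r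
      = inner ℝ (slope x t r) (x r + x t - (2 : ℝ) • q r) * (2 * lam r)⁻¹
        + ‖x t - q r‖ ^ 2 * slope (fun r => (2 * lam r)⁻¹) t r := by
  simp only [slope, vsub_eq_sub, smul_eq_mul, sub_self, sub_zero, real_inner_smul_left,
    norm_sub_sq_eq_add_inner (x r) (x t)]
  ring

theorem hasDerivWithinAt_penalty_increment {x q : ℝ → H} {lam : ℝ → ℝ} {s : Set ℝ} {t lam' : ℝ}
    {v : H} (hx : HasDerivWithinAt x v s t) (hlam : HasDerivWithinAt lam lam' s t)
    (hlam_ne : lam t ≠ 0) (hq : ContinuousWithinAt q s t) :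
    HasDerivWithinAt
      (fun r => ‖x r - q r‖ ^ 2 / (2 * lam r) - ‖x t - q r‖ ^ 2 / (2 * lam t))
      (inner ℝ ((lam t)⁻¹ • (x t - q t)) v - lam' / 2 * ‖(lam t)⁻¹ • (x t - q t)‖ ^ 2) s t := by
  have hpenalty : HasDerivWithinAt (fun r => (2 * lam r)⁻¹) (-(2 * lam') / (2 * lam t) ^ 2) s t :=
    (hlam.const_mul 2).fun_inv (mul_ne_zero two_ne_zero hlam_ne)
  have hsum : ContinuousWithinAt (fun r => x r + x t - (2 : ℝ) • q r) (s \ {t}) t :=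
    ((hx.continuousWithinAt.add_const _).sub (hq.const_smul _)).mono sdiff_subset
  have hdist : ContinuousWithinAt (fun r => ‖x t - q r‖ ^ 2) (s \ {t}) t :=
    ((continuousWithinAt_const.sub hq).norm.pow 2).mono sdiff_subset
  have hinv := (hpenalty.continuousWithinAt.mono (sdiff_subset (t := {t}))).tendsto
  rw [hasDerivWithinAt_iff_tendsto_slope] at hx hpenalty ⊢
  rw [funext (slope_penalty_increment x q lam t)]
  convert ((hx.inner hsum.tendsto).mul hinv).add (hdist.tendsto.mul hpenalty) using 2
  rw [real_inner_comm, norm_smul, mul_pow, Real.norm_eq_abs, sq_abs,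
    show x t + x t - (2 : ℝ) • q t = (2 : ℝ) • (x t - q t) by module]
  simp only [real_inner_smul_right]
  field_simp
  ring

theorem hasDerivWithinAt_moreau {x p : ℝ → H} {lam : ℝ → ℝ} {s : Set ℝ} {t lam' : ℝ} {v : H}
    (hbot : ∀ y, Φ y ≠ ⊥) (hproper : ∃ y, Φ y ≠ ⊤)
    (hx : HasDerivWithinAt x v s t) (hlam : HasDerivWithinAt lam lam' s t) (hlam_ne : lam t ≠ 0)
    (hp : ∀ r ∈ s, IsProxPt Φ (lam r) (x r) (p r)) (hp_cont : ContinuousWithinAt p s t)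
    (ht : t ∈ s) :
    HasDerivWithinAt (fun r => moreau Φ (lam r) (x r))
      (inner ℝ ((lam t)⁻¹ • (x t - p t)) v - lam' / 2 * ‖(lam t)⁻¹ • (x t - p t)‖ ^ 2) s t := by
  obtain ⟨y, hy⟩ := hproper
  have htop : ∀ r ∈ s, Φ (p r) ≠ ⊤ := fun r hr => (hp r hr).ne_top hy
  have hmoreau := fun r hr => (hp r hr).moreau_eq (hbot (p r)) (htop r hr)
  refine hasDerivWithinAt_of_increment_squeeze
    (hasDerivWithinAt_penalty_increment hx hlam hlam_ne hp_cont)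
    (hasDerivWithinAt_penalty_increment (q := fun _ => p t) hx hlam hlam_ne
      continuousWithinAt_const)
    (sub_self _) (sub_self _) (fun r hr => ?_) (fun r hr => ?_)
  · have hmin := (hp t ht).toReal_add_le hbot (htop r hr)
    linarith [hmoreau r hr, hmoreau t ht]
  · have hmin := (hp r hr).toReal_add_le hbot (htop t ht)
    linarith [hmoreau r hr, hmoreau t ht]

end Envelope

section Energy

variable {H : Type*} [NormedAddCommGroup H]

theorem hasDerivWithinAt_anchored_velocity [NormedSpace ℝ H] {x v g : ℝ → H} {β : ℝ → ℝ}
    {s : Set ℝ} {t α β' w : ℝ} {acc g' : H} (z : H) (ht : t ≠ 0)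
    (hx : HasDerivWithinAt x (v t) s t) (hv : HasDerivWithinAt v acc s t)
    (hβ : HasDerivWithinAt β β' s t) (hg : HasDerivWithinAt g g' s t)
    (hode : acc + (α / t) • v t + β t • g' + (w + β' + β t / t) • g t = 0) :
    HasDerivWithinAt (fun r => (α - 1) • (x r - z) + r • (v r + β r • g r))
      (-(t * w) • g t) s t := by
  have hderiv := ((hx.sub_const z).const_smul (α - 1)).add
    ((hasDerivWithinAt_id t s).smul (hv.add (hβ.smul hg)))
  refine hderiv.congr_deriv ?_
  have hacc : acc = -((α / t) • v t + β t • g' + (w + β' + β t / t) • g t) := by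
    rw [eq_neg_iff_add_eq_zero, ← hode]
    abel
  simp only [id, Pi.add_apply, Pi.smul_apply', hacc]
  match_scalars <;> field_simp <;> ring

variable [InnerProductSpace ℝ H]

/-- The Lyapunov energy of a trajectory `x` with velocity `v` and gradient `g` along it, anchored at
a minimizer `z`; `gap` is the optimality gap `Φ_λ(x) - Φ*`, and `w` stands for `b - β' - β / t`. -/
def lyapunovEnergy (α : ℝ) (z : H) (β w gap : ℝ → ℝ) (x v g : ℝ → H) (t : ℝ) : ℝ :=
  t ^ 2 * w t * gap t + 1 / 2 * ‖(α - 1) • (x t - z) + t • (v t + β t • g t)‖ ^ 2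

theorem lyapunovEnergy_nonneg (α : ℝ) (z : H) (β : ℝ → ℝ) {w gap : ℝ → ℝ} (x v g : ℝ → H) {t : ℝ}
    (hw : 0 ≤ w t) (hgap : 0 ≤ gap t) : 0 ≤ lyapunovEnergy α z β w gap x v g t := by
  unfold lyapunovEnergy
  positivity

theorem hasDerivWithinAt_lyapunovEnergy {x v g : ℝ → H} {β w gap : ℝ → ℝ} {s : Set ℝ}
    {t α β' w' c : ℝ} {acc g' : H} (z : H) (ht : t ≠ 0)
    (hx : HasDerivWithinAt x (v t) s t) (hv : HasDerivWithinAt v acc s t)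
    (hβ : HasDerivWithinAt β β' s t) (hg : HasDerivWithinAt g g' s t)
    (hw : HasDerivWithinAt w w' s t)
    (hgap : HasDerivWithinAt gap (inner ℝ (g t) (v t) - c * ‖g t‖ ^ 2) s t)
    (hode : acc + (α / t) • v t + β t • g' + (w t + β' + β t / t) • g t = 0) :
    HasDerivWithinAt (lyapunovEnergy α z β w gap x v g)
      (-(((α - 3) * t * w t - t ^ 2 * w') * gap t
        + (α - 1) * t * w t * (inner ℝ (g t) (x t - z) - gap t)
        + t ^ 2 * w t * (β t + c) * ‖g t‖ ^ 2)) s t := by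
  have hvel := hasDerivWithinAt_anchored_velocity z ht hx hv hβ hg hode
  have hderiv := ((((hasDerivAt_pow 2 t).hasDerivWithinAt (s := s)).mul hw).mul hgap).add
    (hvel.norm_sq.const_mul (1 / 2 : ℝ))
  refine hderiv.congr_deriv ?_
  rw [real_inner_smul_right, real_inner_comm (g t)]
  simp only [Pi.mul_apply, inner_add_right, real_inner_smul_right, real_inner_self_eq_norm_sq]
  push_cast
  ring

theorem setLIntegral_weighted_gap_le_lyapunovEnergy {x v acc g g' : ℝ → H}
    {β β' w w' gap c : ℝ → ℝ} {t₀ α : ℝ} {z : H} (ht₀ : 0 < t₀) (hα : 1 ≤ α)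
    (hx : ∀ t ≥ t₀, HasDerivWithinAt x (v t) (Ici t₀) t)
    (hv : ∀ t ≥ t₀, HasDerivWithinAt v (acc t) (Ici t₀) t)
    (hβ : ∀ t ≥ t₀, HasDerivWithinAt β (β' t) (Ici t₀) t)
    (hg : ∀ t ≥ t₀, HasDerivWithinAt g (g' t) (Ici t₀) t)
    (hw : ∀ t ≥ t₀, HasDerivWithinAt w (w' t) (Ici t₀) t)
    (hgap : ∀ t ≥ t₀,
      HasDerivWithinAt gap (inner ℝ (g t) (v t) - c t * ‖g t‖ ^ 2) (Ici t₀) t)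
    (hode : ∀ t ≥ t₀,
      acc t + (α / t) • v t + β t • g' t + (w t + β' t + β t / t) • g t = 0)
    (hw_nonneg : ∀ t ≥ t₀, 0 ≤ w t) (hgap_nonneg : ∀ t ≥ t₀, 0 ≤ gap t)
    (hgap_le : ∀ t ≥ t₀, gap t ≤ inner ℝ (g t) (x t - z))
    (hdamping : ∀ t > t₀, 0 ≤ β t + c t)
    (hgrowth : ∀ t ≥ t₀, 0 ≤ (α - 3) * w t - t * w' t) :
    ∫⁻ t in Ici t₀, ENNReal.ofReal (((α - 3) * t * w t - t ^ 2 * w' t) * gap t)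
      ≤ ENNReal.ofReal (lyapunovEnergy α z β w gap x v g t₀) := by
  set remainder : ℝ → ℝ := fun t => (α - 1) * t * w t * (inner ℝ (g t) (x t - z) - gap t)
    + t ^ 2 * w t * (β t + c t) * ‖g t‖ ^ 2 with hremainder
  have hpos : ∀ t > t₀, 0 < t := fun t ht => ht₀.trans ht
  have hremainder_nonneg : ∀ t > t₀, 0 ≤ remainder t := fun t ht => by
    have := hpos t ht
    have := hw_nonneg t ht.le
    have := hdamping t ht
    have := sub_nonneg.2 (hgap_le t ht.le)
    have := sub_nonneg.2 hα
    positivity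
  have hintegrand_nonneg : ∀ t > t₀, 0 ≤ ((α - 3) * t * w t - t ^ 2 * w' t) * gap t :=
    fun t ht => mul_nonneg
      (by linear_combination mul_nonneg (hpos t ht).le (hgrowth t ht.le)) (hgap_nonneg t ht.le)
  have hderiv : ∀ t ≥ t₀, HasDerivWithinAt (lyapunovEnergy α z β w gap x v g)
      (-(((α - 3) * t * w t - t ^ 2 * w' t) * gap t + remainder t)) (Ici t₀) t := fun t ht => by
    rw [hremainder, ← add_assoc]
    exact hasDerivWithinAt_lyapunovEnergy z (ht₀.trans_le ht).ne' (hx t ht) (hv t ht) (hβ t ht)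
      (hg t ht) (hw t ht) (hgap t ht) (hode t ht)
  have hbound := setLIntegral_Ici_neg_deriv_le hderiv
    (fun t ht => neg_nonpos.2 (add_nonneg (hintegrand_nonneg t ht) (hremainder_nonneg t ht)))
    (fun t ht => lyapunovEnergy_nonneg α z β x v g (hw_nonneg t ht) (hgap_nonneg t ht))
  simp only [neg_neg] at hbound
  rw [setLIntegral_congr Ioi_ae_eq_Ici.symm] at hbound ⊢
  exact (setLIntegral_mono' measurableSet_Ioi fun t ht => ENNReal.ofReal_le_ofReal
    (le_add_of_nonneg_right (hremainder_nonneg t ht))).trans hbound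

end Energy

theorem moreau_values_integral_finite_general
    {H : Type*} [NormedAddCommGroup H] [InnerProductSpace ℝ H] {Φ : H → EReal}
    (hΦbot : ∀ y, Φ y ≠ ⊥) (hΦproper : ∃ y, Φ y ≠ ⊤) (hΦconv : EConvexOn Φ)
    {t₀ α : ℝ} (ht₀ : 0 < t₀) {β b lam β' lam' w' : ℝ → ℝ}
    (hlampos : ∀ t ≥ t₀, 0 < lam t)
    (hβ' : ∀ t ≥ t₀, HasDerivAt β (β' t) t)
    (hlam' : ∀ t ≥ t₀, HasDerivAt lam (lam' t) t)
    (hw' : ∀ t ≥ t₀, HasDerivAt (fun s => b s - β' s - β s / s) (w' t) t)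
    {x v acc p G' : ℝ → H}
    (hx : ∀ t ≥ t₀, HasDerivAt x (v t) t)
    (hv : ∀ t ≥ t₀, HasDerivAt v (acc t) t)
    (hp : ∀ t ≥ t₀, IsProxPt Φ (lam t) (x t) (p t))
    (hG' : ∀ t ≥ t₀, HasDerivAt (fun s => (lam s)⁻¹ • (x s - p s)) (G' t) t)
    (hode : ∀ t ≥ t₀, acc t + (α / t) • v t + β t • G' t
        + b t • ((lam t)⁻¹ • (x t - p t)) = 0)
    (hα : 1 ≤ α)
    (hdamping : ∀ t > t₀, 0 ≤ β t + lam' t / 2)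
    (hw : ∀ t ≥ t₀, β' t + β t / t ≤ b t)
    (hgrowth : ∀ t ≥ t₀, 0 ≤ (α - 3) * (b t - β' t - β t / t) - t * w' t)
    {z : H} (hz : ∀ y, Φ z ≤ Φ y) :
    ∫⁻ t in Ici t₀, ENNReal.ofReal
      (((α - 3) * t * (b t - β' t - β t / t) - t ^ 2 * w' t)
        * (moreau Φ (lam t) (x t) - (Φ z).toReal))
      ≤ ENNReal.ofReal (lyapunovEnergy α z β (fun s => b s - β' s - β s / s)
          (fun s => moreau Φ (lam s) (x s) - (Φ z).toReal) x v
          (fun s => (lam s)⁻¹ • (x s - p s)) t₀) := by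
  have hz_top : Φ z ≠ ⊤ := hΦproper.elim fun y hy => ne_top_of_le_ne_top hy (hz y)
  have hp_cont : ∀ t ≥ t₀, ContinuousWithinAt p (Ici t₀) t := fun t ht => by
    have hcont := (hx t ht).continuousAt.sub
      ((hlam' t ht).continuousAt.smul (hG' t ht).continuousAt)
    refine hcont.continuousWithinAt.congr_of_mem (fun s hs => ?_) ht
    simp [smul_inv_smul₀ (hlampos s hs).ne']
  refine setLIntegral_weighted_gap_le_lyapunovEnergy (c := fun t => lam' t / 2) ht₀ hα
    (fun t ht => (hx t ht).hasDerivWithinAt) (fun t ht => (hv t ht).hasDerivWithinAt)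
    (fun t ht => (hβ' t ht).hasDerivWithinAt) (fun t ht => (hG' t ht).hasDerivWithinAt)
    (fun t ht => (hw' t ht).hasDerivWithinAt) (fun t ht => ?_) (fun t ht => ?_)
    (fun t ht => by linarith [hw t ht]) (fun t ht => ?_) (fun t ht => ?_) hdamping hgrowth
  · exact (hasDerivWithinAt_moreau hΦbot hΦproper (hx t ht).hasDerivWithinAt
      (hlam' t ht).hasDerivWithinAt (hlampos t ht).ne' hp (hp_cont t ht) ht).sub_const _
  · rw [show b t - β' t - β t / t + β' t + β t / t = b t by ring]
    exact hode t ht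
  · exact sub_nonneg.2 ((hp t ht).toReal_le_moreau (hlampos t ht) hΦbot hz hz_top)
  · exact (hp t ht).moreau_sub_le_inner (hlampos t ht) hΦconv hΦbot hz_top

theorem moreau_values_integral_finite
    {H : Type*} [NormedAddCommGroup H] [InnerProductSpace ℝ H] [CompleteSpace H]
    (Φ : H → EReal)
    (hΦbot : ∀ y, Φ y ≠ ⊥) (hΦproper : ∃ y, Φ y ≠ ⊤)
    (hΦconv : EConvexOn Φ) (hΦlsc : LowerSemicontinuous Φ)
    (t₀ α : ℝ) (ht₀ : 0 < t₀)
    (β b lam β' b' lam' w' : ℝ → ℝ)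
    (hβnonneg : ∀ t ≥ t₀, 0 ≤ β t)
    (hbpos : ∀ t ≥ t₀, 0 < b t)
    (hlampos : ∀ t ≥ t₀, 0 < lam t)
    (hβ' : ∀ t ≥ t₀, HasDerivAt β (β' t) t)
    (hb' : ∀ t ≥ t₀, HasDerivAt b (b' t) t)
    (hlam' : ∀ t ≥ t₀, HasDerivAt lam (lam' t) t)
    (hw' : ∀ t ≥ t₀, HasDerivAt (fun s => b s - β' s - β s / s) (w' t) t)
    (x v acc p G' : ℝ → H)
    (hx : ∀ t ≥ t₀, HasDerivAt x (v t) t)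
    (hv : ∀ t ≥ t₀, HasDerivAt v (acc t) t)
    (hp : ∀ t ≥ t₀, IsProxPt Φ (lam t) (x t) (p t))
    (hG' : ∀ t ≥ t₀, HasDerivAt (fun s => (lam s)⁻¹ • (x s - p s)) (G' t) t)
    (hode : ∀ t ≥ t₀, acc t + (α / t) • v t + β t • G' t
        + b t • ((lam t)⁻¹ • (x t - p t)) = 0)
    (hα : 1 ≤ α)
    (hlammono : MonotoneOn lam (Set.Ici t₀))
    (hw : ∀ t ≥ t₀, β' t + β t / t < b t)
    (hAs1 : ∀ t ≥ t₀, 0 ≤ (α - 3) * (b t - β' t - β t / t) - t * w' t)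
    (z : H) (hz : ∀ y, Φ z ≤ Φ y)
    :
    ∫⁻ t in Set.Ici t₀, ENNReal.ofReal
      (((α - 3) * t * (b t - β' t - β t / t) - t ^ 2 * w' t)
        * (moreau Φ (lam t) (x t) - (Φ z).toReal)) < ⊤ := by
  have hlam'_nonneg : ∀ t ≥ t₀, 0 ≤ lam' t := fun t ht => (hlam' t ht).hasDerivWithinAt
    |>.nonneg_of_monotoneOn (uniqueDiffOn_Ici t₀ t ht).accPt hlammono
  exact (moreau_values_integral_finite_general hΦbot hΦproper hΦconv ht₀ hlampos hβ' hlam' hw' hx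
    hv hp hG' hode hα (fun t ht => by linarith [hβnonneg t ht.le, hlam'_nonneg t ht.le])
    (fun t ht => (hw t ht).le) hAs1 hz).trans_lt ENNReal.ofReal_lt_top
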